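/- Let k be an algebraically closed field of characteristic 0 and let λ be a symplectic partition of 2n whose number of parts p satisfies p ≤ n (equivalently, rank(e) = 2n − p ≥ n for e ∈ O_λ). Then the Zariski closure in Mat_{2n}(k) of the set {x + y : x, y ∈ O_λ ∩ sp_{2n}(k)} equals sp_{2n}(k); that is, the conical secant variety of this nilpotent Sp_{2n}-orbit is all of sp_{2n}. -/

import Mathlib

open Matrix

noncomputable section

/-- The Zariski closure of a set of `N × N` matrices. -/
def zClosure {k : Type*} [CommRing k] {N : ℕ}
    (S : Set (Matrix (Fin N) (Fin N) k)) : Set (Matrix (Fin N) (Fin N) k) :=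
  {M | ∀ P : MvPolynomial (Fin N × Fin N) k,
      (∀ x ∈ S, MvPolynomial.eval (fun q => x q.1 q.2) P = 0) →
      MvPolynomial.eval (fun q => M q.1 q.2) P = 0}

/-- The set of nilpotent matrices of Jordan type `lam`. -/
def jordanOrbit (k : Type*) [Field k] (N : ℕ) {p : ℕ} (lam : Fin p → ℕ) :
    Set (Matrix (Fin N) (Fin N) k) :=
  {M | ∀ i : ℕ, 1 ≤ i → (M ^ i).rank = ∑ l, (lam l - i)}

/-- The standard symplectic form matrix `J = [[0, I_n], [−I_n, 0]]`. -/
def Jmat (k : Type*) [CommRing k] (n : ℕ) : Matrix (Fin (2 * n)) (Fin (2 * n)) k :=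
  Matrix.of fun i j =>
    if (i : ℕ) + n = (j : ℕ) then 1 else if (j : ℕ) + n = (i : ℕ) then -1 else 0

/-- The symplectic Lie algebra `sp_{2n}(k) = {M : Mᵀ J + J M = 0}`. -/
def spSet (k : Type*) [CommRing k] (n : ℕ) : Set (Matrix (Fin (2 * n)) (Fin (2 * n)) k) :=
  {M | Mᵀ * Jmat k n + Jmat k n * M = 0}

/-- A partition is symplectic if each odd part occurs with even multiplicity. -/
def IsSymplecticParts {p : ℕ} (lam : Fin p → ℕ) : Prop :=
  ∀ m : ℕ, Odd m → Even ((Finset.univ.filter (fun l => lam l = m)).card)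

/-! An element `e` of `sp` gives the symmetric form `Q(x, y) = ω(e x, y)`, whose kernel is that of
`e`. If `e` has rank at least `n`, the kernel of `Q` is small enough for there to be a Darboux basis
whose first Lagrangian half is `Q`-orthonormal, so the orbit contains a block matrix
`[[A, B], [1, D]]`. Conjugating it by `diag(a, a⁻¹)` and scaling by `a²` stays in the orbit and gives
`[[a² A, a⁴ B], [1, a² D]]`, with limit `[[0, 0], [1, 0]]` at `a = 0`. Carrying along in the sum
the conjugate of the same matrix under `[[0, r], [-r⁻¹, 0]]` with `-r² = t`, the closure of the
set of sums contains every `[[0, diag t], [1, 0]]` with all `t i ≠ 0`.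
Every invertible element of `sp` with separable characteristic polynomial is conjugate under the
symplectic group to such a matrix: pair each eigenvector `v` with an eigenvector `v'` for the
opposite eigenvalue and split off the plane spanned by `v + c v'` and its image. A line through one
such element consists, up to finitely many points, of such elements, so the closure is all of `sp`.

That the orbit is nonempty is seen on the Jordan model: pair each Jordan chain, reversed and with
alternating signs, with a chain of the same length, which must be a different chain when the length
is odd. -/

open LinearMap (BilinForm)
open Module Submodule

section Darboux

variable {k V : Type*} [Field k] [AddCommGroup V] [Module k V]

/-- A Darboux family for the bilinear form `ω`: the vectors `w i` span an isotropic subspace, the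
vectors `u i` span an isotropic subspace, and the two are dual to each other. The sign in `pair` is
the one for which the Gram matrix of `Sum.elim w u` is `Matrix.J`. -/
structure IsDarboux {ι : Type*} [DecidableEq ι] (ω : BilinForm k V) (w u : ι → V) : Prop where
  left : ∀ i j, ω (w i) (w j) = 0
  right : ∀ i j, ω (u i) (u j) = 0
  pair : ∀ i j, ω (u i) (w j) = if i = j then 1 else 0

theorem mem_orthogonal_span_pair {ω : BilinForm k V} {w u v : V} :
    v ∈ ω.orthogonal (span k {w, u}) ↔ ω w v = 0 ∧ ω u v = 0 := by
  refine ⟨fun h => ⟨h w (subset_span (by simp)), h u (subset_span (by simp))⟩,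
    fun ⟨hw, hu⟩ x hx => ?_⟩
  obtain ⟨a, b, rfl⟩ := mem_span_pair.1 hx
  simp [hw, hu]

section HyperbolicPair

variable {ω : BilinForm k V} {w u : V}

theorem disjoint_span_pair_orthogonal (hω : ω.IsAlt) (h : ω u w = 1) :
    Disjoint (span k {w, u}) (ω.orthogonal (span k {w, u})) := by
  refine disjoint_def.2 fun x hx hx' => ?_
  obtain ⟨a, b, rfl⟩ := mem_span_pair.1 hx
  have h' : ω w u = -1 := by rw [← hω.neg_eq, h]
  have hab : a = 0 ∧ b = 0 := by
    simpa [hω.self_eq_zero, h, h'] using (mem_orthogonal_span_pair.1 hx').symm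
  simp [hab]

theorem finrank_span_pair (hω : ω.IsAlt) (h : ω u w = 1) : finrank k (span k {w, u}) = 2 := by
  have h' : ω w u = -1 := by rw [← hω.neg_eq, h]
  have hli : LinearIndependent k ![w, u] := LinearIndependent.pair_iff.2 fun a b hab =>
    ⟨by simpa [hω.self_eq_zero, h] using congrArg (ω u) hab,
      by simpa [hω.self_eq_zero, h'] using congrArg (ω w) hab⟩
  rw [← Matrix.range_cons_cons_empty w u ![], finrank_span_eq_card hli, Fintype.card_fin]

variable [FiniteDimensional k V]

theorem isCompl_span_pair_orthogonal (hω : ω.IsAlt) (h : ω u w = 1) :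
    IsCompl (span k {w, u}) (ω.orthogonal (span k {w, u})) :=
  (LinearMap.BilinForm.isCompl_orthogonal_iff_disjoint hω.isRefl).2
    (disjoint_span_pair_orthogonal hω h)

theorem finrank_orthogonal_span_pair_add_two (hω : ω.IsAlt) (h : ω u w = 1) :
    finrank k (ω.orthogonal (span k {w, u})) + 2 = finrank k V := by
  rw [← finrank_add_eq_of_isCompl (isCompl_span_pair_orthogonal hω h), finrank_span_pair hω h,
    add_comm]

theorem nondegenerate_restrict_orthogonal_span_pair (hω : ω.IsAlt) (hnd : ω.Nondegenerate)
    (h : ω u w = 1) : (ω.restrict (ω.orthogonal (span k {w, u}))).Nondegenerate := by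
  rw [LinearMap.BilinForm.restrict_nondegenerate_iff_isCompl_orthogonal hω.isRefl,
    LinearMap.BilinForm.orthogonal_orthogonal hnd hω.isRefl]
  exact (isCompl_span_pair_orthogonal hω h).symm

end HyperbolicPair

theorem IsDarboux.cons {ω : BilinForm k V} {w u : V} {n : ℕ} (hω : ω.IsAlt) (h : ω u w = 1)
    {w' u' : Fin n → ω.orthogonal (span k {w, u})}
    (hd : IsDarboux (ω.restrict (ω.orthogonal (span k {w, u}))) w' u') :
    IsDarboux ω (Fin.cons w fun i => (w' i : V)) (Fin.cons u fun i => (u' i : V)) := by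
  have hw (x : ω.orthogonal (span k {w, u})) : ω w x = 0 := (mem_orthogonal_span_pair.1 x.2).1
  have hu (x : ω.orthogonal (span k {w, u})) : ω u x = 0 := (mem_orthogonal_span_pair.1 x.2).2
  have hw' (x : ω.orthogonal (span k {w, u})) : ω x w = 0 := hω.eq_iff.1 (hw x)
  have hu' (x : ω.orthogonal (span k {w, u})) : ω x u = 0 := hω.eq_iff.1 (hu x)
  refine ⟨fun i j => ?_, fun i j => ?_, fun i j => ?_⟩ <;>
    refine Fin.cases ?_ (fun i => ?_) i <;> refine Fin.cases ?_ (fun j => ?_) j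
  · exact hω.self_eq_zero w
  · exact hw (w' j)
  · exact hw' (w' i)
  · exact hd.left i j
  · exact hω.self_eq_zero u
  · exact hu (u' j)
  · exact hu' (u' i)
  · exact hd.right i j
  · simpa using h
  · simpa [(Fin.succ_ne_zero _).symm] using hu (w' j)
  · simpa [Fin.succ_ne_zero] using hw' (u' i)
  · simpa using hd.pair i j

theorem exists_apply_self_ne_zero [NeZero (2 : k)] {Q : BilinForm k V} (hQ : Q.IsSymm)
    (hQ0 : Q ≠ 0) : ∃ x, Q x x ≠ 0 := by
  by_contra! h
  exact hQ0 (LinearMap.BilinForm.ext_of_isSymm hQ LinearMap.BilinForm.isSymm_zero h)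

theorem exists_apply_self_ne_zero_of_ne_zero [NeZero (2 : k)] {Q : BilinForm k V}
    (hQ : Q.IsSymm) (hQ0 : Q ≠ 0) {f : Dual k V} (hf : f ≠ 0) : ∃ x, Q x x ≠ 0 ∧ f x ≠ 0 := by
  obtain ⟨x, hx⟩ := exists_apply_self_ne_zero hQ hQ0
  obtain ⟨y, hy⟩ := DFunLike.ne_iff.1 hf
  rcases ne_or_eq (f x) 0 with hfx | hfx
  · exact ⟨x, hx, hfx⟩
  by_contra! h
  have hyy : Q y y = 0 := by by_contra hyy; exact hy (h y hyy)
  have hadd : Q (x + y) (x + y) = 0 := by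
    by_contra hadd; exact hy (by simpa [hfx] using h _ hadd)
  have hsub : Q (x - y) (x - y) = 0 := by
    by_contra hsub; exact hy (by simpa [hfx] using h _ hsub)
  simp only [map_add, map_sub, LinearMap.add_apply, LinearMap.sub_apply, hyy] at hadd hsub
  refine hx ((mul_eq_zero.1 (?_ : 2 * Q x x = 0)).resolve_left two_ne_zero)
  linear_combination hadd + hsub

/-- The two alternatives of the conclusion are what keeps the kernel of `Q` small on the
orthogonal complement of the hyperbolic pair through `w`. -/
theorem exists_apply_self_eq_one [IsAlgClosed k] [NeZero (2 : k)] {ω Q : BilinForm k V}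
    (hω : ω.Nondegenerate) (hQ : Q.IsSymm) (hQ0 : Q ≠ 0) :
    ∃ w, Q w w = 1 ∧ (LinearMap.ker Q = ⊥ ∨ ∃ z ∈ LinearMap.ker Q, ω w z ≠ 0) := by
  obtain ⟨x, hx, h⟩ :
      ∃ x, Q x x ≠ 0 ∧ (LinearMap.ker Q = ⊥ ∨ ∃ z ∈ LinearMap.ker Q, ω x z ≠ 0) := by
    rcases eq_or_ne (LinearMap.ker Q) ⊥ with hk | hk
    · obtain ⟨x, hx⟩ := exists_apply_self_ne_zero hQ hQ0
      exact ⟨x, hx, Or.inl hk⟩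
    · obtain ⟨z, hz, hz0⟩ := exists_mem_ne_zero_of_ne_bot hk
      have hωz : ω.flip z ≠ 0 := fun h => hz0 (hω.2 z fun y => LinearMap.congr_fun h y)
      obtain ⟨x, hx, hx'⟩ := exists_apply_self_ne_zero_of_ne_zero hQ hQ0 hωz
      exact ⟨x, hx, Or.inr ⟨z, hz, hx'⟩⟩
  obtain ⟨r, hr⟩ := IsAlgClosed.exists_pow_nat_eq (Q x x) two_pos
  have hr0 : r ≠ 0 := by
    rintro rfl
    exact hx (by simpa using hr.symm)
  refine ⟨r⁻¹ • x, ?_, h.imp_right ?_⟩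
  · simp only [map_smul, LinearMap.smul_apply, smul_eq_mul, ← hr]
    field_simp
  · rintro ⟨z, hz, hz'⟩
    exact ⟨z, hz, by simp [hr0, hz']⟩

section Kernel

variable [FiniteDimensional k V] {ω Q : BilinForm k V} {w u z : V}

theorem finrank_ker_restrict_orthogonal_lt (hQ : Q.IsSymm) (hw : Q w w = 1) (hu : ω u = Q w)
    (hz : z ∈ LinearMap.ker Q) (hwz : ω w z ≠ 0) :
    finrank k (LinearMap.ker (Q.restrict (ω.orthogonal (span k {w, u})))) <
      finrank k (LinearMap.ker Q) := by
  set W := ω.orthogonal (span k {w, u})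
  have hQz (y : V) : Q y z = 0 := by rw [← hQ.eq z y, LinearMap.mem_ker.1 hz]; rfl
  have hortho : ∀ x ∈ W, ∀ y ∈ span k {w, z}, Q x y = 0 := by
    intro x hx y hy
    obtain ⟨a, b, rfl⟩ := mem_span_pair.1 hy
    have hxw : Q x w = 0 := by
      rw [← hQ.eq w x, ← hu]
      exact (mem_orthogonal_span_pair.1 hx).2
    simp [hxw, hQz]
  have hcodisjoint : Codisjoint W (span k {w, z}) := by
    refine codisjoint_iff_exists_add_eq.2 fun y => ?_
    set c := ω w (y - Q w y • w) / ω w z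
    refine ⟨y - Q w y • w - c • z, Q w y • w + c • z, mem_orthogonal_span_pair.2 ⟨?_, ?_⟩,
      mem_span_pair.2 ⟨_, _, rfl⟩, by abel⟩
    · rw [map_sub, map_smul, smul_eq_mul, div_mul_cancel₀ _ hwz, sub_self]
    · simp [hu, hw, hQz]
  rw [LinearMap.BilinForm.ker_restrict_eq_of_codisjoint hcodisjoint hortho,
    ← finrank_map_subtype_eq, map_comap_subtype]
  refine finrank_lt_finrank_of_lt (lt_of_le_of_ne inf_le_right fun h => hwz ?_)
  exact (mem_orthogonal_span_pair.1 (inf_eq_right.1 h hz)).1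

theorem finrank_ker_restrict_orthogonal_le_one (hω : ω.IsAlt) (hQ : Q.IsSymm) (huw : ω u w = 1)
    (hu : ω u = Q w) (hker : LinearMap.ker Q = ⊥) :
    finrank k (LinearMap.ker (Q.restrict (ω.orthogonal (span k {w, u})))) ≤ 1 := by
  set W := ω.orthogonal (span k {w, u})
  let f : LinearMap.ker (Q.restrict W) →ₗ[k] k := Q u ∘ₗ W.subtype ∘ₗ Submodule.subtype _
  suffices hf : Function.Injective f by simpa using LinearMap.finrank_le_finrank_of_injective hf
  refine (injective_iff_map_eq_zero f).2 ?_
  rintro ⟨v, hv⟩ (hfv : Q u v = 0)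
  have hQv : Q v = 0 := by
    ext y
    obtain ⟨x, y, hx, hy, rfl⟩ :=
      codisjoint_iff_exists_add_eq.1 (isCompl_span_pair_orthogonal hω huw).codisjoint y
    obtain ⟨a, b, rfl⟩ := mem_span_pair.1 hx
    have hwv : Q w v = 0 := by
      rw [← hu]
      exact (mem_orthogonal_span_pair.1 v.2).2
    have hyv : Q v y = 0 := LinearMap.congr_fun hv ⟨y, hy⟩
    simp [← hQ.eq w, ← hQ.eq u, hwv, hfv, hyv]
  exact Subtype.ext (Subtype.ext (LinearMap.ker_eq_bot'.1 hker _ hQv))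

end Kernel

theorem exists_isDarboux_orthonormal [IsAlgClosed k] [NeZero (2 : k)] [FiniteDimensional k V]
    {n : ℕ} {ω Q : BilinForm k V} (hω : ω.IsAlt) (hnd : ω.Nondegenerate) (hQ : Q.IsSymm)
    (hdim : finrank k V = 2 * n) (hker : finrank k (LinearMap.ker Q) ≤ n) :
    ∃ w u : Fin n → V, IsDarboux ω w u ∧ ∀ i j, Q (w i) (w j) = if i = j then 1 else 0 := by
  induction n generalizing V with
  | zero => exact ⟨Fin.elim0, Fin.elim0, ⟨nofun, nofun, nofun⟩, nofun⟩
  | succ n ih =>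
    have hQ0 : Q ≠ 0 := by
      rintro rfl
      rw [LinearMap.ker_zero, finrank_top] at hker
      omega
    obtain ⟨w, hw, hcase⟩ := exists_apply_self_eq_one hnd hQ hQ0
    obtain ⟨u, hu⟩ : ∃ u, ω u = Q w := (ω.toDual hnd).surjective (Q w)
    have huw : ω u w = 1 := by rw [hu, hw]
    have hfinrank := finrank_orthogonal_span_pair_add_two hω huw
    set W := ω.orthogonal (span k {w, u})
    have hker' : finrank k (LinearMap.ker (Q.restrict W)) ≤ n := by
      rcases hcase with hbot | ⟨z, hz, hwz⟩
      · have hle_one : finrank k (LinearMap.ker (Q.restrict W)) ≤ 1 :=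
          finrank_ker_restrict_orthogonal_le_one hω hQ huw hu hbot
        have hle_finrank := finrank_le (LinearMap.ker (Q.restrict W))
        omega
      · exact Nat.le_of_lt_succ
          ((finrank_ker_restrict_orthogonal_lt hQ hw hu hz hwz).trans_le hker)
    obtain ⟨w', u', hd, hq⟩ := ih (ω := ω.restrict W) (Q := Q.restrict W) (fun v => hω v)
      (nondegenerate_restrict_orthogonal_span_pair hω hnd huw) ⟨fun x y => hQ.eq x y⟩ (by omega)
      hker'
    have hQw (x : W) : Q w x = 0 := hu ▸ (mem_orthogonal_span_pair.1 x.2).2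
    refine ⟨_, _, hd.cons hω huw, fun i j => ?_⟩
    refine Fin.cases ?_ (fun i => ?_) i <;> refine Fin.cases ?_ (fun j => ?_) j
    · simpa using hw
    · simpa [(Fin.succ_ne_zero _).symm] using hQw (w' j)
    · simpa [Fin.succ_ne_zero, ← hQ.eq w] using hQw (w' i)
    · simpa using hq i j

theorem apply_eq_neg_apply_of_isSkewAdjoint {ω : BilinForm k V} {X : End k V}
    (hX : LinearMap.IsSkewAdjoint ω X) (x y : V) : ω (X x) y = -ω x (X y) := by
  simpa using hX x y

theorem apply_mem_orthogonal_span_pair {ω : BilinForm k V} {X : End k V}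
    (hX : LinearMap.IsSkewAdjoint ω X) {w x : V} {t : k} (hw : X (X w) = t • w)
    (hx : x ∈ ω.orthogonal (span k {w, X w})) :
    X x ∈ ω.orthogonal (span k {w, X w}) := by
  rw [mem_orthogonal_span_pair] at hx ⊢
  have hXw := apply_eq_neg_apply_of_isSkewAdjoint hX w x
  have hXXw := apply_eq_neg_apply_of_isSkewAdjoint hX (X w) x
  rw [hx.2] at hXw
  rw [hw, map_smul, LinearMap.smul_apply, hx.1, smul_zero] at hXXw
  exact ⟨neg_eq_zero.1 hXw.symm, neg_eq_zero.1 hXXw.symm⟩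

section Semisimple

variable [IsAlgClosed k] [FiniteDimensional k V] {ω : BilinForm k V} {X : End k V}

/-- Eigenspaces for `a` and `b` are orthogonal unless `a + b = 0`, and they span. -/
theorem exists_apply_eq_neg_smul_of_isSemisimple (hnd : ω.Nondegenerate)
    (hX : LinearMap.IsSkewAdjoint ω X) (hss : X.IsSemisimple) {a : k} {v : V}
    (hv : X.HasEigenvector a v) : ∃ v', X v' = -a • v' ∧ ω v v' ≠ 0 := by
  by_contra! h
  refine hv.2 (hnd.1 v fun y => ?_)
  have hle : (⨆ b, X.eigenspace b) ≤ LinearMap.ker (ω v) := by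
    refine iSup_le fun b y hy => LinearMap.mem_ker.2 ?_
    rw [End.mem_eigenspace_iff] at hy
    have hab : (a + b) * ω v y = 0 := by
      have := apply_eq_neg_apply_of_isSkewAdjoint hX v y
      rw [hv.apply_eq_smul, hy, map_smul, map_smul, LinearMap.smul_apply, smul_eq_mul,
        smul_eq_mul] at this
      linear_combination this
    refine (mul_eq_zero.1 hab).elim (fun hab => h y ?_) id
    rw [hy, eq_neg_of_add_eq_zero_right hab]
  rw [hss.iSup_eigenspace_eq_top] at hle
  exact hle mem_top

theorem exists_hyperbolic_pair_of_isSemisimple [NeZero (2 : k)] [Nontrivial V] (hω : ω.IsAlt)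
    (hnd : ω.Nondegenerate) (hX : LinearMap.IsSkewAdjoint ω X) (hss : X.IsSemisimple)
    (hinj : Function.Injective X) :
    ∃ (w : V) (t : k), t ≠ 0 ∧ X (X w) = t • w ∧ ω (X w) w = 1 := by
  obtain ⟨a, ha⟩ := End.exists_eigenvalue X
  obtain ⟨v, hv⟩ := ha.exists_hasEigenvector
  have hXv := hv.apply_eq_smul
  have ha0 : a ≠ 0 := by
    rintro rfl
    exact hv.2 (hinj (by rw [hXv, zero_smul, map_zero]))
  obtain ⟨v', hXv', hvv'⟩ := exists_apply_eq_neg_smul_of_isSemisimple hnd hX hss hv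
  have h2 : (2 : k) ≠ 0 := two_ne_zero
  refine ⟨v + (2 * a * ω v v')⁻¹ • v', a * a, mul_ne_zero ha0 ha0, ?_, ?_⟩
  · simp only [map_add, map_smul, hXv, hXv', neg_smul, map_neg, smul_neg, neg_neg, smul_add]
    module
  · simp only [map_add, map_smul, hXv, hXv', LinearMap.add_apply, LinearMap.smul_apply,
      hω.self_eq_zero, smul_eq_mul, ← hω.neg_eq v v']
    field_simp
    ring

end Semisimple

theorem exists_isDarboux_of_isSemisimple [IsAlgClosed k] [NeZero (2 : k)] [FiniteDimensional k V]
    {n : ℕ} {ω : BilinForm k V} {X : End k V} (hω : ω.IsAlt) (hnd : ω.Nondegenerate)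
    (hX : LinearMap.IsSkewAdjoint ω X) (hss : X.IsSemisimple) (hinj : Function.Injective X)
    (hdim : finrank k V = 2 * n) :
    ∃ (w u : Fin n → V) (t : Fin n → k), IsDarboux ω w u ∧ (∀ i, t i ≠ 0) ∧
      (∀ i, X (w i) = u i) ∧ ∀ i, X (u i) = t i • w i := by
  induction n generalizing V with
  | zero => exact ⟨Fin.elim0, Fin.elim0, Fin.elim0, ⟨nofun, nofun, nofun⟩, nofun, nofun, nofun⟩
  | succ n ih =>
    have : Nontrivial V := nontrivial_of_finrank_pos (R := k) (by omega)
    obtain ⟨w, t, ht, hXXw, huw⟩ := exists_hyperbolic_pair_of_isSemisimple hω hnd hX hss hinj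
    have hfinrank := finrank_orthogonal_span_pair_add_two hω huw
    have hmaps : ∀ x ∈ ω.orthogonal (span k {w, X w}), X x ∈ ω.orthogonal (span k {w, X w}) :=
      fun x => apply_mem_orthogonal_span_pair hX hXXw
    obtain ⟨w', u', t', hd, ht', hw', hu'⟩ := ih (ω := ω.restrict _) (X := X.restrict hmaps)
      (fun v => hω v) (nondegenerate_restrict_orthogonal_span_pair hω hnd huw)
      (fun x y => hX x y) (hss.restrict hmaps) (hinj.injOn.injective.codRestrict _) (by omega)
    refine ⟨_, _, Fin.cons t t', hd.cons hω huw, Fin.cases ht ht', ?_, ?_⟩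
    · exact Fin.cases rfl fun i => congrArg Subtype.val (hw' i)
    · exact Fin.cases hXXw fun i => congrArg Subtype.val (hu' i)

section Basis

variable {ι : Type*} [DecidableEq ι] {ω : BilinForm k V} {w u : ι → V}

theorem IsDarboux.apply_left_right (h : IsDarboux ω w u) (hω : ω.IsAlt) (i j : ι) :
    ω (w i) (u j) = -if i = j then 1 else 0 := by
  rw [← hω.neg_eq, h.pair]
  simp only [eq_comm]

theorem IsDarboux.linearIndependent (h : IsDarboux ω w u) (hω : ω.IsAlt) :
    LinearIndependent k (Sum.elim w u) := by
  refine .of_pairwise_dual_eq_zero_one _ (Sum.elim (fun i => ω (u i)) fun i => -ω (w i)) ?_ ?_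
  · rintro (i | i) (j | j) hij
    · simpa [h.pair] using hij
    · simp [h.right]
    · simp [h.left]
    · simpa [h.apply_left_right hω] using hij
  · rintro (i | i)
    · simp [h.pair]
    · simp [h.apply_left_right hω]

theorem IsDarboux.exists_basis [Fintype ι] [FiniteDimensional k V] (h : IsDarboux ω w u)
    (hω : ω.IsAlt) (hdim : finrank k V = 2 * Fintype.card ι) :
    ∃ b : Basis (ι ⊕ ι) k V, ⇑b = Sum.elim w u ∧ LinearMap.BilinForm.toMatrix b ω = J ι k := by
  have hcard : Fintype.card (ι ⊕ ι) = finrank k V := by rw [hdim, Fintype.card_sum, two_mul]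
  let b := basisOfLinearIndependentOfCardEqFinrank' _ (h.linearIndependent hω) hcard
  have hb : ⇑b = Sum.elim w u := coe_basisOfLinearIndependentOfCardEqFinrank' _ _ hcard
  refine ⟨b, hb, ?_⟩
  ext (i | i) (j | j)
  · simp [hb, J, h.left]
  · simp [hb, J, h.apply_left_right hω, one_apply]
  · simp [hb, J, h.pair, one_apply]
  · simp [hb, J, h.right]

end Basis

end Darboux

section Symplectic

open LieAlgebra.Symplectic (sp)

variable {l R : Type*} [Fintype l] [DecidableEq l] [CommRing R]

theorem mem_sp_iff {M : Matrix (l ⊕ l) (l ⊕ l) R} : M ∈ sp l R ↔ Mᵀ * J l R = -(J l R * M) := by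
  rw [← mul_neg]
  exact mem_skewAdjointMatricesSubmodule _ _

theorem fromBlocks_mem_sp_iff {A B C D : Matrix l l R} :
    fromBlocks A B C D ∈ sp l R ↔ Bᵀ = B ∧ Cᵀ = C ∧ D = -Aᵀ := by
  simp only [mem_sp_iff, J, fromBlocks_transpose, fromBlocks_multiply, fromBlocks_neg,
    fromBlocks_inj, mul_zero, mul_one, zero_add, zero_mul, neg_mul, one_mul, neg_neg, mul_neg,
    add_zero, neg_eq_iff_eq_neg, eq_comm (a := -Aᵀ)]
  tauto

theorem toMatrix_mem_sp {V : Type*} [AddCommGroup V] [Module R V] {ω : BilinForm R V}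
    {b : Basis (l ⊕ l) R V} (hb : LinearMap.BilinForm.toMatrix b ω = J l R) {X : End R V}
    (hX : LinearMap.IsSkewAdjoint ω X) : LinearMap.toMatrix b b X ∈ sp l R := by
  rw [mem_sp_iff, ← hb, ← LinearMap.BilinForm.toMatrix_compLeft,
    ← LinearMap.BilinForm.toMatrix_compRight, ← map_neg]
  congr 1
  ext x y
  simpa using hX x y

end Symplectic

theorem exists_mem_sp_toBlocks₂₁_eq_one {k V : Type*} [Field k] [IsAlgClosed k] [NeZero (2 : k)]
    [AddCommGroup V] [Module k V] [FiniteDimensional k V] {n : ℕ} {ω : BilinForm k V} {E : End k V}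
    (hω : ω.IsAlt) (hnd : ω.Nondegenerate) (hE : LinearMap.IsSkewAdjoint ω E)
    (hdim : finrank k V = 2 * n) (hrank : n ≤ finrank k (LinearMap.range E)) :
    ∃ M ∈ LieAlgebra.Symplectic.sp (Fin n) k, M.toBlocks₂₁ = 1 ∧
      ∀ i, (M ^ i).rank = finrank k (LinearMap.range (E ^ i)) := by
  have hEω := apply_eq_neg_apply_of_isSkewAdjoint hE
  let Q : BilinForm k V := ω.compLeft E
  have hQ : Q.IsSymm := ⟨fun x y => (hEω x y).trans (hω.neg_eq x (E y))⟩
  have hker : finrank k (LinearMap.ker Q) ≤ n := by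
    have hQE : LinearMap.ker Q ≤ LinearMap.ker E :=
      fun x hx => hnd.1 (E x) fun y => LinearMap.congr_fun hx y
    have := finrank_mono hQE
    have := LinearMap.finrank_range_add_finrank_ker E
    omega
  obtain ⟨w, u, hd, hq⟩ := exists_isDarboux_orthonormal hω hnd hQ hdim hker
  obtain ⟨b, hb, hJ⟩ := hd.exists_basis hω (by rw [hdim, Fintype.card_fin])
  refine ⟨LinearMap.toMatrix b b E, toMatrix_mem_sp hJ hE, ?_, fun i => ?_⟩
  · have hgram : (LinearMap.BilinForm.toMatrix b Q).toBlocks₁₁ = 1 := by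
      ext i j
      simp [hb, hq, one_apply, toBlocks₁₁]
    rw [LinearMap.BilinForm.toMatrix_compLeft, hJ,
      ← fromBlocks_toBlocks (LinearMap.toMatrix b b E), fromBlocks_transpose, J,
      fromBlocks_multiply, toBlocks_fromBlocks₁₁] at hgram
    simpa using hgram
  · rw [LinearMap.toMatrix_pow, rank_eq_finrank_range_toLin _ b b, toLin_toMatrix]

section Matrices

variable {k I : Type*} [Field k] [Fintype I] [DecidableEq I]

theorem isAlt_toBilin' [NeZero (2 : k)] {B : Matrix I I k} (hB : Bᵀ = -B) :
    (toBilin' B).IsAlt := fun v => by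
  have h : v ⬝ᵥ B *ᵥ v = -(v ⬝ᵥ B *ᵥ v) := by
    conv_lhs => rw [dotProduct_mulVec, dotProduct_comm, ← mulVec_transpose, hB, neg_mulVec,
      dotProduct_neg]
  rw [toBilin'_apply']
  refine (mul_eq_zero.1 (?_ : 2 * (v ⬝ᵥ B *ᵥ v) = 0)).resolve_left two_ne_zero
  linear_combination h

theorem isSkewAdjoint_toLin' {B E : Matrix I I k} (h : Eᵀ * B = -(B * E)) :
    LinearMap.IsSkewAdjoint (toBilin' B) (toLin' E) := by
  have hadj : Matrix.IsAdjointPair B B E (-E) := by rw [Matrix.IsAdjointPair, h, mul_neg]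
  have hpair := (isAdjointPair_toLinearMap₂' B B E (-E)).2 hadj
  rwa [map_neg] at hpair

theorem exists_mem_sp_toBlocks₂₁_eq_one_of_matrix [IsAlgClosed k] [NeZero (2 : k)] {n : ℕ}
    {B E : Matrix I I k} (hI : Fintype.card I = 2 * n) (hB : Bᵀ = -B) (hdet : B.det ≠ 0)
    (hE : Eᵀ * B = -(B * E)) (hrank : n ≤ E.rank) :
    ∃ M ∈ LieAlgebra.Symplectic.sp (Fin n) k, M.toBlocks₂₁ = 1 ∧
      ∀ i, (M ^ i).rank = (E ^ i).rank := by
  obtain ⟨M, hM, hM₂₁, hMrank⟩ := exists_mem_sp_toBlocks₂₁_eq_one (isAlt_toBilin' hB)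
    (LinearMap.BilinForm.nondegenerate_toBilin'_of_det_ne_zero' B hdet) (isSkewAdjoint_toLin' hE)
    (by rw [finrank_fintype_fun_eq_card, hI]) hrank
  refine ⟨M, hM, hM₂₁, fun i => ?_⟩
  rw [hMrank, ← toLin'_pow]
  rfl

end Matrices

theorem exists_eq_mul_antidiagonal_mul_inv {k : Type*} [Field k] [IsAlgClosed k] [NeZero (2 : k)]
    {n : ℕ} {X : Matrix (Fin n ⊕ Fin n) (Fin n ⊕ Fin n) k}
    (hX : X ∈ LieAlgebra.Symplectic.sp (Fin n) k) (hdet : X.det ≠ 0)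
    (hss : Module.End.IsSemisimple (toLin' X)) :
    ∃ G ∈ symplecticGroup (Fin n) k, ∃ t : Fin n → k, (∀ i, t i ≠ 0) ∧
      X = G * fromBlocks 0 (diagonal t) 1 0 * G⁻¹ := by
  have hω := isAlt_toBilin' (J_transpose (Fin n) k)
  obtain ⟨w, u, t, hd, ht, hw, hu⟩ := exists_isDarboux_of_isSemisimple hω
    (LinearMap.BilinForm.nondegenerate_toBilin'_of_det_ne_zero' _ (isUnit_det_J _ _).ne_zero)
    (isSkewAdjoint_toLin' (mem_sp_iff.1 hX)) hss
    (mulVec_injective_iff_isUnit.2 ((isUnit_iff_isUnit_det X).2 hdet.isUnit))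
    (by simp [two_mul] : finrank k (Fin n ⊕ Fin n → k) = 2 * n)
  obtain ⟨b, hb, hJ⟩ := hd.exists_basis hω (by simp [two_mul])
  have hXw (i : Fin n) : toLin' X (b (Sum.inl i)) = b (Sum.inr i) := by simpa [hb] using hw i
  have hXu (i : Fin n) : toLin' X (b (Sum.inr i)) = t i • b (Sum.inl i) := by
    simpa [hb] using hu i
  have hXb : LinearMap.toMatrix b b (toLin' X) = fromBlocks 0 (diagonal t) 1 0 := by
    ext s (j | j)
    · rw [LinearMap.toMatrix_apply, hXw, b.repr_self]
      rcases s with i | i <;> simp [one_apply, Finsupp.single_apply, eq_comm]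
    · rw [LinearMap.toMatrix_apply, hXu, map_smul, b.repr_self]
      rcases s with i | i
      · rcases eq_or_ne j i with rfl | hji <;> simp [*, Ne.symm]
      · simp
  let c := Pi.basisFun k (Fin n ⊕ Fin n)
  have hG : c.toMatrix b ∈ symplecticGroup (Fin n) k := by
    have hgram := LinearMap.BilinForm.toMatrix_mul_basis_toMatrix c b (toBilin' (J (Fin n) k))
    rw [hJ, LinearMap.BilinForm.toMatrix_basisFun, LinearMap.BilinForm.toMatrix'_toBilin'] at hgram
    exact SymplecticGroup.mem_iff'.2 hgram
  refine ⟨c.toMatrix b, hG, t, ht, ?_⟩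
  rw [← hXb, inv_eq_right_inv (Basis.toMatrix_mul_toMatrix_flip c b),
    basis_toMatrix_mul_linearMap_toMatrix_mul_basis_toMatrix]
  exact (LinearMap.toMatrix'_toLin' X).symm

section PEquivRank

variable {m n k : Type*} [Fintype n] [DecidableEq n] [Field k]

theorem toMatrix_mul_toMatrix_symm [DecidableEq m] (f : m ≃. n) :
    (f.toMatrix : Matrix m n k) * (f.symm.toMatrix : Matrix n m k) =
      diagonal fun x => if (f x).isSome then 1 else 0 := by
  ext x y
  rw [← PEquiv.toMatrix_trans, PEquiv.self_trans_symm, PEquiv.toMatrix_apply, diagonal_apply]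
  simp only [PEquiv.mem_ofSet_iff, Set.mem_ofPred_eq]
  grind

theorem rank_toMatrix_pequiv [Fintype m] (f : m ≃. n) :
    (f.toMatrix : Matrix m n k).rank = Fintype.card {x // (f x).isSome} := by
  classical
  have hrank : ((f.toMatrix : Matrix m n k) * (f.symm.toMatrix : Matrix n m k)).rank =
      Fintype.card {x // (f x).isSome} := by
    rw [toMatrix_mul_toMatrix_symm, rank_diagonal]
    exact Fintype.card_congr (Equiv.subtypeEquivRight fun x => by split_ifs with h <;> simp [h])
  have hfff : (f.trans f.symm).trans f = f := by
    refine PEquiv.ext fun x => Option.ext fun y => ?_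
    simp only [PEquiv.self_trans_symm, PEquiv.trans_eq_some, PEquiv.ofSet_eq_some_iff,
      Set.mem_ofPred_eq, Option.isSome_iff_exists]
    grind
  refine le_antisymm ?_ (hrank ▸ rank_mul_le_left _ _)
  conv_lhs => rw [← hfff, PEquiv.toMatrix_trans, PEquiv.toMatrix_trans]
  exact hrank ▸ rank_mul_le_left _ _

end PEquivRank

section Involutions

theorem exists_involutive_of_even_card {α : Type*} [Fintype α] (h : Even (Fintype.card α)) :
    ∃ τ : α → α, Function.Involutive τ ∧ ∀ a, τ a ≠ a := by
  obtain ⟨c, hc⟩ := h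
  have e : α ≃ Fin c ⊕ Fin c := Fintype.equivOfCardEq (by simp [hc])
  refine ⟨fun a => e.symm (e a).swap, fun a => by simp, fun a ha => ?_⟩
  have hswap : (e a).swap = e a := (Equiv.symm_apply_eq e).1 ha
  rcases h : e a with x | x <;> simp [h] at hswap

theorem exists_involutive_of_even_card_fiber {α β : Type*} [Fintype α] [DecidableEq β] {f : α → β}
    {S : Set β} (h : ∀ b ∈ S, Even (Finset.univ.filter fun a => f a = b).card) :
    ∃ σ : α → α, Function.Involutive σ ∧ (∀ a, f (σ a) = f a) ∧ ∀ a, f a ∈ S → σ a ≠ a := by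
  have hfiber (b : β) : ∃ τ : {a // f a = b} → {a // f a = b},
      Function.Involutive τ ∧ (b ∈ S → ∀ a, τ a ≠ a) := by
    by_cases hb : b ∈ S
    · obtain ⟨τ, hτ, hτ'⟩ := exists_involutive_of_even_card (α := {a // f a = b})
        (by rw [Fintype.card_subtype]; exact h b hb)
      exact ⟨τ, hτ, fun _ => hτ'⟩
    · exact ⟨id, fun _ => rfl, fun hb' => absurd hb' hb⟩
  choose τ hτ hτ' using hfiber
  have hτ_eq (b : β) (a : {a // f a = b}) : (τ (f a) ⟨a, rfl⟩ : α) = τ b a := by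
    obtain ⟨a, rfl⟩ := a
    rfl
  refine ⟨fun a => τ (f a) ⟨a, rfl⟩, fun a => ?_, fun a => (τ (f a) ⟨a, rfl⟩).2, fun a ha hfix =>
    hτ' _ ha ⟨a, rfl⟩ (Subtype.ext hfix)⟩
  simp only [hτ_eq, hτ (f a) ⟨a, rfl⟩]

theorem exists_sign_of_involutive (R : Type*) [Ring R] [Nontrivial R] {α : Type*} [LinearOrder α]
    {σ : α → α} {m : α → ℕ} (hσ : Function.Involutive σ) (hm : ∀ a, m (σ a) = m a)
    (hodd : ∀ a, Odd (m a) → σ a ≠ a) :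
    ∃ η : α → R, (∀ a, η a ≠ 0) ∧ ∀ a, η (σ a) = (-1) ^ m a * η a := by
  refine ⟨fun a => if Odd (m a) ∧ a < σ a then -1 else 1, fun a => ?_, fun a => ?_⟩
  · dsimp only
    split_ifs <;> simp
  · simp only [hσ a, hm]
    rcases Nat.even_or_odd (m a) with h | h
    · simp [h, Nat.not_odd_iff_even.2 h]
    · rcases lt_or_gt_of_ne (hodd a h) with hlt | hgt
      · simp [h, hlt, hlt.not_gt]
      · simp [h, hgt, hgt.not_gt]

end Involutions

section JordanModel

variable {ι : Type*} (μ : ι → ℕ)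

/-- The index set of a Jordan basis with one chain of length `μ l` for each `l`. -/
abbrev JordanIndex : Type _ := Σ l, Fin (μ l)

variable {μ}

theorem JordanIndex.ext {x y : JordanIndex μ} (h₁ : x.1 = y.1) (h₂ : (x.2 : ℕ) = y.2) : x = y := by
  obtain ⟨l, i⟩ := x
  obtain ⟨l', i'⟩ := y
  obtain rfl : l = l' := h₁
  exact congrArg _ (Fin.ext h₂)

variable (μ)

/-- The partial shift of the Jordan chains by `i` places. Its matrix is the `i`-th power of the
nilpotent matrix in Jordan form with chains of lengths `μ l`. -/
def jordanShift (i : ℕ) : JordanIndex μ ≃. JordanIndex μ where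
  toFun x := if h : x.2 + i < μ x.1 then some ⟨x.1, x.2 + i, h⟩ else none
  invFun y := if i ≤ y.2 then some ⟨y.1, y.2 - i, by omega⟩ else none
  inv x y := by
    obtain ⟨l, i'⟩ := x
    obtain ⟨l', j⟩ := y
    simp only [Option.dite_none_right_eq_some, Option.ite_none_right_eq_some,
      Option.some.injEq]
    constructor <;>
    · rintro ⟨h, ⟨⟩⟩
      exact ⟨by dsimp only; omega, JordanIndex.ext rfl (by dsimp only; omega)⟩

variable {μ}

theorem mem_jordanShift {i : ℕ} {x y : JordanIndex μ} :
    y ∈ jordanShift μ i x ↔ x.1 = y.1 ∧ (x.2 : ℕ) + i = y.2 := by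
  obtain ⟨l, j⟩ := x
  obtain ⟨l', j'⟩ := y
  simp only [jordanShift, PEquiv.coe_mk, Option.mem_def, Option.dite_none_right_eq_some,
    Option.some.injEq]
  refine ⟨?_, ?_⟩
  · rintro ⟨-, ⟨⟩⟩
    exact ⟨rfl, rfl⟩
  · rintro ⟨h, h'⟩
    obtain rfl : l = l' := h
    exact ⟨h' ▸ j'.2, JordanIndex.ext rfl h'⟩

variable (μ)

theorem jordanShift_trans (i j : ℕ) :
    (jordanShift μ i).trans (jordanShift μ j) = jordanShift μ (i + j) := by
  refine PEquiv.ext fun x => Option.ext fun y => ?_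
  rw [← Option.mem_def, ← Option.mem_def, PEquiv.mem_trans]
  simp only [mem_jordanShift]
  refine ⟨?_, fun ⟨h, _⟩ => ?_⟩
  · rintro ⟨z, ⟨h₁, h₂⟩, h₁', h₂'⟩
    exact ⟨h₁.trans h₁', by omega⟩
  · exact ⟨⟨y.1, x.2 + i, by omega⟩, ⟨h, rfl⟩, rfl, by dsimp only; omega⟩

variable [DecidableEq ι] (k : Type*) [Field k]

theorem toMatrix_jordanShift_zero : ((jordanShift μ 0).toMatrix : Matrix _ _ k) = 1 := by
  ext x y
  rw [PEquiv.toMatrix_apply, one_apply]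
  refine if_congr ?_ rfl rfl
  rw [mem_jordanShift]
  exact ⟨fun h => JordanIndex.ext h.1 h.2, by rintro rfl; exact ⟨rfl, rfl⟩⟩

variable [Fintype ι]

theorem toMatrix_jordanShift_one_pow (i : ℕ) :
    ((jordanShift μ 1).toMatrix : Matrix _ _ k) ^ i = (jordanShift μ i).toMatrix := by
  induction i with
  | zero => rw [pow_zero, toMatrix_jordanShift_zero]
  | succ i ih => rw [pow_succ, ih, ← PEquiv.toMatrix_trans, jordanShift_trans]

theorem rank_toMatrix_jordanShift (i : ℕ) :
    ((jordanShift μ i).toMatrix : Matrix _ _ k).rank = ∑ l, (μ l - i) := by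
  have hsome (x : JordanIndex μ) : (jordanShift μ i x).isSome ↔ x.2 + i < μ x.1 := by
    simp [jordanShift]
  let e : {x : JordanIndex μ // (jordanShift μ i x).isSome} ≃ Σ l, Fin (μ l - i) :=
    { toFun := fun x => ⟨x.1.1, x.1.2, by have := (hsome x).1 x.2; omega⟩
      invFun := fun y => ⟨⟨y.1, y.2, by omega⟩, (hsome _).2 (by dsimp only; omega)⟩ }
  rw [rank_toMatrix_pequiv, Fintype.card_congr e]
  simp

variable {μ k}

/-- The involution of a Jordan basis which reverses each chain and permutes the chains by `σ`. -/
def jordanRev {σ : ι → ι} (hσ : Function.Involutive σ) (hμ : ∀ l, μ (σ l) = μ l) :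
    Equiv.Perm (JordanIndex μ) :=
  Function.Involutive.toPerm (fun x => ⟨σ x.1, μ x.1 - 1 - x.2, by rw [hμ]; omega⟩) fun x =>
    JordanIndex.ext (hσ x.1) (by dsimp only; rw [hμ]; omega)

/-- The Gram matrix pairing each Jordan basis vector with its image under `jordanRev`, with signs
alternating along each chain and `η` giving the sign of each chain. -/
def jordanForm {σ : ι → ι} (hσ : Function.Involutive σ) (hμ : ∀ l, μ (σ l) = μ l) (η : ι → k) :
    Matrix (JordanIndex μ) (JordanIndex μ) k :=
  diagonal (fun x => (-1) ^ (x.2 : ℕ) * η x.1) * (jordanRev hσ hμ).permMatrix k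

variable {σ : ι → ι} (hσ : Function.Involutive σ) (hμ : ∀ l, μ (σ l) = μ l) {η : ι → k}

theorem jordanForm_mul_jordanShift_apply (i : ℕ) (x y : JordanIndex μ) :
    (jordanForm hσ hμ η * ((jordanShift μ i).toMatrix : Matrix _ _ k)) x y =
      if σ x.1 = y.1 ∧ (x.2 : ℕ) + y.2 + 1 = μ x.1 + i then (-1) ^ (x.2 : ℕ) * η x.1 else 0 := by
  rw [jordanForm, Matrix.mul_assoc, diagonal_mul, Equiv.Perm.permMatrix, ← PEquiv.toMatrix_trans,
    PEquiv.toMatrix_apply, mul_ite, mul_one, mul_zero]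
  refine if_congr ?_ rfl rfl
  simp only [PEquiv.mem_trans, Equiv.toPEquiv_apply, Option.mem_some_iff, exists_eq_left',
    mem_jordanShift]
  change σ x.1 = y.1 ∧ μ x.1 - 1 - x.2 + i = y.2 ↔ _
  exact and_congr_right fun _ => by omega

theorem transpose_jordanForm_mul_jordanShift (hη : ∀ l, η (σ l) = (-1) ^ μ l * η l) (i : ℕ) :
    (jordanForm hσ hμ η * ((jordanShift μ i).toMatrix : Matrix _ _ k))ᵀ =
      (-1 : k) ^ (i + 1) • (jordanForm hσ hμ η * ((jordanShift μ i).toMatrix : Matrix _ _ k)) := by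
  ext x y
  rw [transpose_apply, Matrix.smul_apply, jordanForm_mul_jordanShift_apply,
    jordanForm_mul_jordanShift_apply, smul_eq_mul]
  by_cases h : σ x.1 = y.1 ∧ (x.2 : ℕ) + y.2 + 1 = μ x.1 + i
  · have hμy : μ y.1 = μ x.1 := h.1 ▸ hμ x.1
    have hηy : η y.1 = (-1) ^ μ x.1 * η x.1 := h.1 ▸ hη x.1
    rw [if_pos h, if_pos ⟨by rw [← h.1, hσ], by omega⟩, hηy, ← mul_assoc, ← mul_assoc,
      ← pow_add, ← pow_add]
    congr 1
    exact neg_one_pow_congr (by grind)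
  · rw [if_neg h, if_neg, mul_zero]
    rintro ⟨h₁, h₂⟩
    have hμx : μ x.1 = μ y.1 := h₁ ▸ hμ y.1
    exact h ⟨by rw [← h₁, hσ], by omega⟩

theorem det_jordanForm_ne_zero (hη : ∀ l, η l ≠ 0) : (jordanForm hσ hμ η).det ≠ 0 := by
  rw [jordanForm, det_mul, det_diagonal, det_permutation]
  refine mul_ne_zero (Finset.prod_ne_zero_iff.2 fun x _ => by simp [hη]) ?_
  exact ((Equiv.Perm.sign _).isUnit.map (Int.castRingHom k)).ne_zero

variable (k) in
theorem exists_isSkewAdjoint_form_jordanShift {p : ℕ} {lam : Fin p → ℕ}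
    (hlam : ∀ m, Odd m → Even (Finset.univ.filter fun l => lam l = m).card) :
    ∃ B : Matrix (JordanIndex lam) (JordanIndex lam) k, Bᵀ = -B ∧ B.det ≠ 0 ∧
      ((jordanShift lam 1).toMatrix)ᵀ * B = -(B * (jordanShift lam 1).toMatrix) := by
  obtain ⟨σ, hσ, hσ_lam, hσ_ne⟩ := exists_involutive_of_even_card_fiber (S := {m | Odd m}) hlam
  obtain ⟨η, hη_ne, hη⟩ := exists_sign_of_involutive k hσ hσ_lam hσ_ne
  have htranspose := transpose_jordanForm_mul_jordanShift hσ hσ_lam hη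
  have hB : (jordanForm hσ hσ_lam η)ᵀ = -jordanForm hσ hσ_lam η := by
    simpa [toMatrix_jordanShift_zero] using htranspose 0
  refine ⟨_, hB, det_jordanForm_ne_zero hσ hσ_lam hη_ne, ?_⟩
  rw [← neg_eq_iff_eq_neg, ← Matrix.mul_neg, ← hB, ← transpose_mul, htranspose 1]
  simp

end JordanModel

section CurveClosed

open Filter Polynomial

variable {k V W : Type*} [Field k] [AddCommGroup V] [Module k V] [AddCommGroup W] [Module k W]

variable (k) in
/-- A set is curve-closed if it contains every polynomial curve of which it contains all but
finitely many points. This is the only property of Zariski closed sets used below, and unlike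
Zariski closedness it makes sense without coordinates. -/
def IsCurveClosed (Z : Set V) : Prop :=
  ∀ (d : ℕ) (v : Fin d → V), (∀ᶠ t : k in cofinite, ∑ i : Fin d, t ^ (i : ℕ) • v i ∈ Z) →
    ∀ t : k, ∑ i : Fin d, t ^ (i : ℕ) • v i ∈ Z

theorem IsCurveClosed.preimage {Z : Set W} (hZ : IsCurveClosed k Z) (f : V →ₗ[k] W) :
    IsCurveClosed k (f ⁻¹' Z) := by
  intro d v h t
  simp only [Set.mem_preimage, map_sum, map_smul] at h ⊢
  exact hZ d (f ∘ v) h t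

theorem eventually_eval_ne_zero {q : k[X]} (hq : q ≠ 0) : ∀ᶠ t in cofinite, q.eval t ≠ 0 := by
  refine (finite_setOfPred_isRoot hq).subset fun t ht => ?_
  simpa using ht

theorem eq_zero_of_eventually_eval_eq_zero [Infinite k] {q : k[X]}
    (hq : ∀ᶠ t in cofinite, q.eval t = 0) : q = 0 := by
  by_contra hne
  obtain ⟨t, ht, ht'⟩ := (hq.and (eventually_eval_ne_zero hne)).exists
  exact ht' ht

theorem isCurveClosed_zClosure [Infinite k] {N : ℕ} (S : Set (Matrix (Fin N) (Fin N) k)) :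
    IsCurveClosed k (zClosure S) := by
  intro d v h t P hP
  let Q : k[X] := MvPolynomial.aeval (fun q => ∑ i : Fin d, X ^ (i : ℕ) * C (v i q.1 q.2)) P
  have hQ (t : k) : Q.eval t =
      MvPolynomial.eval (fun q => (∑ i : Fin d, t ^ (i : ℕ) • v i) q.1 q.2) P := by
    have hring : (evalRingHom t).comp (algebraMap k k[X]) = RingHom.id k := by ext; simp
    rw [← coe_evalRingHom, MvPolynomial.map_aeval, hring, MvPolynomial.coe_eval₂Hom,
      MvPolynomial.eval₂_id]
    simp [Matrix.sum_apply, mul_comm (t ^ _)]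
  have hQ_zero : Q = 0 := eq_zero_of_eventually_eval_eq_zero <| h.mono fun t ht => by
    rw [hQ, ht P hP]
  rw [← hQ, hQ_zero, eval_zero]

theorem subset_zClosure {N : ℕ} (S : Set (Matrix (Fin N) (Fin N) k)) : S ⊆ zClosure S :=
  fun _ hM _ hP => hP _ hM

theorem zClosure_subset_submodule {N : ℕ} {S : Set (Matrix (Fin N) (Fin N) k)}
    {W : Submodule k (Matrix (Fin N) (Fin N) k)} (hS : S ⊆ W) : zClosure S ⊆ W := by
  intro M hM
  by_contra hMW
  obtain ⟨f, hf, hW⟩ := Submodule.exists_le_ker_of_notMem hMW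
  let P : MvPolynomial (Fin N × Fin N) k :=
    ∑ q, MvPolynomial.C (f (single q.1 q.2 1)) * MvPolynomial.X q
  have hP (A : Matrix (Fin N) (Fin N) k) : MvPolynomial.eval (fun q => A q.1 q.2) P = f A := by
    have hA : A = ∑ q : Fin N × Fin N, A q.1 q.2 • single q.1 q.2 (1 : k) := by
      simpa [Fintype.sum_prod_type, smul_single] using matrix_eq_sum_single A
    conv_rhs => rw [hA, map_sum]
    simp only [map_smul, P, map_sum, map_mul, MvPolynomial.eval_C, MvPolynomial.eval_X,
      smul_eq_mul, mul_comm]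
  exact hf (hP M ▸ hM P fun A hA => by rw [hP]; exact hW (hS hA))

end CurveClosed

section Separable

open Filter Polynomial

variable {k m : Type*} [Field k] [Fintype m] [DecidableEq m]

theorem resultant_ne_zero_iff_isCoprime {f g : k[X]} {n : ℕ} (hf : f.Monic) (hg : g.natDegree ≤ n) :
    resultant f g f.natDegree n ≠ 0 ↔ IsCoprime f g := by
  obtain ⟨d, rfl⟩ := Nat.exists_eq_add_of_le hg
  rw [resultant_add_right_deg _ _ _ _ _ le_rfl, hf.coeff_natDegree, one_pow, one_mul,
    ← isUnit_resultant_iff_isCoprime hf, isUnit_iff_ne_zero]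

theorem eventually_separable_map_eval {P : k[X][X]} (hP : P.Monic) {t₀ : k}
    (h : (P.map (evalRingHom t₀)).Separable) :
    ∀ᶠ t in cofinite, (P.map (evalRingHom t)).Separable := by
  let r : k[X] := resultant P P.derivative P.natDegree P.natDegree
  have hr (t : k) : r.eval t ≠ 0 ↔ (P.map (evalRingHom t)).Separable := by
    rw [Separable, ← resultant_ne_zero_iff_isCoprime (hP.map _)
      ((natDegree_derivative_le _).trans (Nat.sub_le _ _)), derivative_map, resultant_map_map,
      hP.natDegree_map]
    rfl
  have hr_ne : r ≠ 0 := by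
    rintro h₀
    exact (hr t₀).2 h (by rw [h₀, eval_zero])
  exact (eventually_eval_ne_zero hr_ne).mono fun t => (hr t).1

theorem eventually_separable_charpoly_and_det_ne_zero {A : Matrix m m k}
    (hA : A.charpoly.Separable) (hdet : A.det ≠ 0) (B : Matrix m m k) :
    ∀ᶠ t : k in cofinite, (A + t • B).charpoly.Separable ∧ (A + t • B).det ≠ 0 := by
  let L : Matrix m m k[X] := A.map C + (X : k[X]) • B.map C
  have hL (t : k) : (evalRingHom t).mapMatrix L = A + t • B := by
    ext
    simp [L, mul_comm t]
  have hL₀ : A + (0 : k) • B = A := by rw [zero_smul, add_zero]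
  have hsep : ∀ᶠ t in cofinite, (L.charpoly.map (evalRingHom t)).Separable := by
    refine eventually_separable_map_eval L.charpoly_monic (t₀ := 0) ?_
    rwa [← charpoly_map, ← RingHom.mapMatrix_apply, hL, hL₀]
  have hdetL : ∀ᶠ t in cofinite, L.det.eval t ≠ 0 := by
    refine eventually_eval_ne_zero fun h₀ => hdet ?_
    rw [← hL₀, ← hL, ← RingHom.map_det, h₀, map_zero]
  filter_upwards [hsep, hdetL] with t ht ht'
  rw [← hL, ← RingHom.map_det, RingHom.mapMatrix_apply, charpoly_map]
  exact ⟨ht, ht'⟩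

theorem isSemisimple_toLin'_of_separable {M : Matrix m m k} (h : M.charpoly.Separable) :
    Module.End.IsSemisimple (toLin' M) := by
  refine Module.End.isSemisimple_of_squarefree_aeval_eq_zero h.squarefree ?_
  have := aeval_algHom_apply (toLinAlgEquiv' (R := k) (n := m)) M M.charpoly
  rwa [aeval_self_charpoly, map_zero] at this

end Separable

section SymplecticCone

open Filter

variable {k l : Type*} [Field k] [Fintype l] [DecidableEq l]

/-- A set of matrices indexed by two copies of `l` is a symplectic cone if it is stable under
conjugation by the symplectic group and under nonzero scalars. These are the only properties of
the nilpotent orbit used to bound its secant variety from below. -/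
structure IsSymplecticCone (O : Set (Matrix (l ⊕ l) (l ⊕ l) k)) : Prop where
  conj_mem : ∀ G ∈ symplecticGroup l k, ∀ M ∈ O, G * M * G⁻¹ ∈ O
  smul_mem : ∀ a : k, a ≠ 0 → ∀ M ∈ O, a • M ∈ O

variable {O Z : Set (Matrix (l ⊕ l) (l ⊕ l) k)} {A B C D : Matrix l l k}

theorem IsSymplecticCone.fromBlocks_mem (hO : IsSymplecticCone O) (h : fromBlocks A B C D ∈ O)
    {a : k} (ha : a ≠ 0) : fromBlocks (a ^ 2 • A) (a ^ 4 • B) C (a ^ 2 • D) ∈ O := by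
  let G : Matrix (l ⊕ l) (l ⊕ l) k := fromBlocks (a • 1) 0 0 (a⁻¹ • 1)
  have hG : G ∈ symplecticGroup l k := by
    rw [SymplecticGroup.mem_iff]
    simp [G, J, fromBlocks_multiply, fromBlocks_transpose, smul_smul, ha]
  have hG_inv : G⁻¹ = fromBlocks (a⁻¹ • 1) 0 0 (a • 1) :=
    inv_eq_right_inv (by simp [G, fromBlocks_multiply, smul_smul, ha])
  have hmem := hO.smul_mem _ (pow_ne_zero 2 ha) _ (hO.conj_mem G hG _ h)
  rw [hG_inv] at hmem
  have hB : a ^ 2 * (a * a) = a ^ 4 := by ring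
  have hC : a ^ 2 * (a⁻¹ * a⁻¹) = 1 := by field_simp
  simpa [G, fromBlocks_multiply, fromBlocks_smul, smul_smul, ha, hB, hC] using hmem

theorem IsCurveClosed.fromBlocks_zero_mem (hZ : IsCurveClosed k Z)
    (hO : IsSymplecticCone O) (hOZ : O ⊆ Z) (h : fromBlocks A B C D ∈ O) :
    fromBlocks 0 0 C 0 ∈ Z := by
  have hcurve (a : k) : ∑ i : Fin 5, a ^ (i : ℕ) •
      ![fromBlocks 0 0 C 0, 0, fromBlocks A 0 0 D, 0, fromBlocks 0 B 0 0] i =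
        fromBlocks (a ^ 2 • A) (a ^ 4 • B) C (a ^ 2 • D) := by
    simp [Fin.sum_univ_five, fromBlocks_smul, fromBlocks_add]
  have hmem := hZ 5 ![fromBlocks 0 0 C 0, 0, fromBlocks A 0 0 D, 0, fromBlocks 0 B 0 0]
    ((eventually_cofinite_ne (0 : k)).mono fun a ha => by
      rw [hcurve]
      exact hOZ (hO.fromBlocks_mem h ha)) 0
  rw [hcurve] at hmem
  simpa using hmem

theorem IsCurveClosed.antidiagonal_mem (hZ : IsCurveClosed k Z)
    (hO : IsSymplecticCone O) (hOZ : ∀ x ∈ O, ∀ y ∈ O, x + y ∈ Z) (h : fromBlocks A B 1 D ∈ O)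
    {r : l → k} (hr : ∀ i, r i ≠ 0) : fromBlocks 0 (diagonal fun i => -r i ^ 2) 1 0 ∈ Z := by
  let H : Matrix (l ⊕ l) (l ⊕ l) k := fromBlocks 0 (diagonal r) (-diagonal fun i => (r i)⁻¹) 0
  have hH : H ∈ symplecticGroup l k := by
    have hneg : (-1 : Matrix l l k) = diagonal fun _ => -1 := by rw [← diagonal_one, diagonal_neg]
    rw [SymplecticGroup.mem_iff]
    simp [H, J, fromBlocks_multiply, fromBlocks_transpose, hr, hneg, -fromBlocks_diagonal]
  have hH_inv : H⁻¹ = fromBlocks 0 (-diagonal r) (diagonal fun i => (r i)⁻¹) 0 :=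
    inv_eq_right_inv (by simp [H, fromBlocks_multiply, hr])
  let f := LinearMap.id + LinearMap.mulLeftRight k (H, H⁻¹)
  have hmem := (hZ.preimage f).fromBlocks_zero_mem hO
    (fun x hx => hOZ _ hx _ (hO.conj_mem H hH x hx)) h
  have hf : f (fromBlocks 0 0 1 0) = fromBlocks 0 (diagonal fun i => -r i ^ 2) 1 0 := by
    rw [LinearMap.add_apply, LinearMap.mulLeftRight_apply, hH_inv]
    simp [H, fromBlocks_multiply, fromBlocks_add, sq]
  rwa [Set.mem_preimage, hf] at hmem

end SymplecticCone

section SecantVariety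

open LieAlgebra.Symplectic (sp)

variable {k : Type*} [Field k] [IsAlgClosed k] [NeZero (2 : k)] {n : ℕ}
  {O Z : Set (Matrix (Fin n ⊕ Fin n) (Fin n ⊕ Fin n) k)}
  {M X : Matrix (Fin n ⊕ Fin n) (Fin n ⊕ Fin n) k}

theorem IsCurveClosed.mem_of_separable (hZ : IsCurveClosed k Z)
    (hO : IsSymplecticCone O) (hOZ : ∀ x ∈ O, ∀ y ∈ O, x + y ∈ Z) (hM : M ∈ O)
    (hM₂₁ : M.toBlocks₂₁ = 1) (hX : X ∈ sp (Fin n) k) (hsep : X.charpoly.Separable)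
    (hdet : X.det ≠ 0) : X ∈ Z := by
  obtain ⟨G, hG, t, ht, rfl⟩ :=
    exists_eq_mul_antidiagonal_mul_inv hX hdet (isSemisimple_toLin'_of_separable hsep)
  choose r hr using fun i => IsAlgClosed.exists_pow_nat_eq (-t i) two_pos
  have hr_ne (i : Fin n) : r i ≠ 0 := by
    rw [← pow_ne_zero_iff two_ne_zero, hr]
    exact neg_ne_zero.2 (ht i)
  have hmem := (hZ.preimage (LinearMap.mulLeftRight k (G, G⁻¹))).antidiagonal_mem hO
    (fun x hx y hy => by
      simpa [mul_add, add_mul] using hOZ _ (hO.conj_mem G hG x hx) _ (hO.conj_mem G hG y hy))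
    (by rwa [← hM₂₁, fromBlocks_toBlocks]) hr_ne
  simpa [hr] using hmem

variable (k n) in
theorem exists_mem_sp_separable_charpoly :
    ∃ Y ∈ sp (Fin n) k, Y.charpoly.Separable ∧ Y.det ≠ 0 := by
  have hinf : Infinite k := IsAlgClosed.instInfinite
  let c := (Set.finite_singleton (0 : k)).infinite_compl.natEmbedding
  choose a ha using fun i : Fin n => IsAlgClosed.exists_pow_nat_eq (c i : k) two_pos
  have ha_ne (i : Fin n) : a i ≠ 0 := by
    rw [← pow_ne_zero_iff two_ne_zero, ha]
    exact (c i).2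
  have ha_sq {i j : Fin n} (h : a i ^ 2 = a j ^ 2) : i = j := by
    rw [ha, ha] at h
    exact Fin.val_injective (c.injective (Subtype.ext h))
  have ha_neg (i j : Fin n) : a i ≠ -a j := fun h => by
    obtain rfl : i = j := ha_sq (by rw [h, neg_sq])
    exact ha_ne i ((mul_eq_zero.1 (by linear_combination h : 2 * a i = 0)).resolve_left two_ne_zero)
  refine ⟨fromBlocks (diagonal a) 0 0 (-diagonal a), fromBlocks_mem_sp_iff.2 (by simp), ?_⟩
  rw [diagonal_neg, fromBlocks_diagonal]
  constructor
  · rw [charpoly_diagonal, Polynomial.separable_prod_X_sub_C_iff]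
    rintro (i | i) (j | j) h
    · exact congrArg Sum.inl (ha_sq (congrArg (· ^ 2) h))
    · exact absurd h (ha_neg i j)
    · exact absurd h.symm (ha_neg j i)
    · exact congrArg Sum.inr (ha_sq (congrArg (· ^ 2) (neg_injective h)))
  · rw [det_diagonal, Fintype.prod_sum_type]
    simp [Finset.prod_eq_zero_iff, ha_ne]

theorem IsCurveClosed.sp_subset (hZ : IsCurveClosed k Z)
    (hO : IsSymplecticCone O) (hOZ : ∀ x ∈ O, ∀ y ∈ O, x + y ∈ Z) (hM : M ∈ O)
    (hM₂₁ : M.toBlocks₂₁ = 1) (hX : X ∈ sp (Fin n) k) : X ∈ Z := by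
  obtain ⟨Y, hY, hsep, hdet⟩ := exists_mem_sp_separable_charpoly k n
  have hcurve (t : k) : ∑ i : Fin 2, t ^ (i : ℕ) • ![Y, X - Y] i = Y + t • (X - Y) := by
    simp
  have hmem := hZ 2 ![Y, X - Y] ((eventually_separable_charpoly_and_det_ne_zero hsep hdet
    (X - Y)).mono fun t ht => by
      rw [hcurve]
      exact hZ.mem_of_separable hO hOZ hM hM₂₁
        (add_mem hY (Submodule.smul_mem _ t (sub_mem hX hY))) ht.1 ht.2) 1
  rw [hcurve] at hmem
  simpa using hmem

end SecantVariety

section JordanCone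

open LieAlgebra.Symplectic (sp)

variable {k : Type*} [Field k]

theorem conj_nonsing_inv_pow {m : Type*} [Fintype m] [DecidableEq m] {G : Matrix m m k}
    (hG : IsUnit G.det) (M : Matrix m m k) (i : ℕ) : (G * M * G⁻¹) ^ i = G * M ^ i * G⁻¹ := by
  induction i with
  | zero => simp [mul_nonsing_inv _ hG]
  | succ i ih =>
    rw [pow_succ, ih, pow_succ]
    simp only [Matrix.mul_assoc, nonsing_inv_mul_cancel_left _ _ hG]

theorem conj_mem_sp {l : Type*} [Fintype l] [DecidableEq l] {G M : Matrix (l ⊕ l) (l ⊕ l) k}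
    (hG : G ∈ symplecticGroup l k) (hM : M ∈ sp l k) : G * M * G⁻¹ ∈ sp l k := by
  have hdet : IsUnit G.det := SymplecticGroup.symplectic_det hG
  have hGJ : Gᵀ * J l k * G = J l k := SymplecticGroup.mem_iff'.1 hG
  have hright : Gᵀ * J l k = J l k * G⁻¹ := by
    rw [← mul_nonsing_inv_cancel_right _ (Gᵀ * J l k) hdet, hGJ]
  have hleft : G⁻¹ᵀ * J l k = J l k * G := by
    calc G⁻¹ᵀ * J l k = G⁻¹ᵀ * (Gᵀ * J l k * G) := by rw [hGJ]
      _ = (G * G⁻¹)ᵀ * (J l k * G) := by simp only [transpose_mul, Matrix.mul_assoc]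
      _ = J l k * G := by rw [mul_nonsing_inv _ hdet, transpose_one, Matrix.one_mul]
  rw [mem_sp_iff] at hM ⊢
  calc (G * M * G⁻¹)ᵀ * J l k = G⁻¹ᵀ * Mᵀ * (Gᵀ * J l k) := by
        simp only [transpose_mul, Matrix.mul_assoc]
    _ = G⁻¹ᵀ * (Mᵀ * J l k) * G⁻¹ := by rw [hright]; simp only [Matrix.mul_assoc]
    _ = -(G⁻¹ᵀ * J l k * M * G⁻¹) := by
        rw [hM]; simp only [Matrix.mul_neg, Matrix.neg_mul, Matrix.mul_assoc]
    _ = -(J l k * (G * M * G⁻¹)) := by rw [hleft]; simp only [Matrix.mul_assoc]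

variable (k) in
/-- The matrices of Jordan type `lam` in the symplectic Lie algebra, with rows and columns indexed
by two copies of `l`; this indexing separates the two Lagrangian halves of `k²ⁿ`. -/
def sympJordanOrbit (l : Type*) [Fintype l] [DecidableEq l] {p : ℕ} (lam : Fin p → ℕ) :
    Set (Matrix (l ⊕ l) (l ⊕ l) k) :=
  {M | M ∈ sp l k ∧ ∀ i : ℕ, 1 ≤ i → (M ^ i).rank = ∑ j, (lam j - i)}

theorem isSymplecticCone_sympJordanOrbit (l : Type*) [Fintype l] [DecidableEq l] {p : ℕ}
    (lam : Fin p → ℕ) : IsSymplecticCone (sympJordanOrbit k l lam) where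
  conj_mem G hG M hM := by
    have hdet : IsUnit G.det := SymplecticGroup.symplectic_det hG
    refine ⟨conj_mem_sp hG hM.1, fun i hi => ?_⟩
    rw [conj_nonsing_inv_pow hdet,
      rank_mul_eq_left_of_isUnit_det _ _ (isUnit_nonsing_inv_det G hdet),
      rank_mul_eq_right_of_isUnit_det _ _ hdet, hM.2 i hi]
  smul_mem a ha M hM := by
    refine ⟨Submodule.smul_mem _ a hM.1, fun i hi => ?_⟩
    rw [smul_pow, rank_smul_of_mem_nonZeroDivisors _
      (mem_nonZeroDivisors_of_ne_zero (pow_ne_zero i ha)), hM.2 i hi]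

theorem exists_mem_sympJordanOrbit_toBlocks₂₁_eq_one [IsAlgClosed k] [NeZero (2 : k)] {n p : ℕ}
    {lam : Fin p → ℕ} (hsum : ∑ l, lam l = 2 * n) (hsymp : IsSymplecticParts lam) (hpn : p ≤ n) :
    ∃ M ∈ sympJordanOrbit k (Fin n) lam, M.toBlocks₂₁ = 1 := by
  obtain ⟨B, hB, hdet, hadj⟩ := exists_isSkewAdjoint_form_jordanShift k hsymp
  have hrank (i : ℕ) :
      ((jordanShift lam 1).toMatrix ^ i : Matrix _ _ k).rank = ∑ j, (lam j - i) := by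
    rw [toMatrix_jordanShift_one_pow, rank_toMatrix_jordanShift]
  have hcard : Fintype.card (JordanIndex lam) = 2 * n := by
    simpa using hsum
  have hn : n ≤ ((jordanShift lam 1).toMatrix : Matrix _ _ k).rank := by
    rw [rank_toMatrix_jordanShift]
    have : ∑ j, lam j ≤ ∑ j, (lam j - 1) + p := by
      simpa [Finset.sum_add_distrib] using
        Finset.sum_le_sum fun j (_ : j ∈ Finset.univ) => show lam j ≤ lam j - 1 + 1 by omega
    omega
  obtain ⟨M, hM, hM₂₁, hM_rank⟩ :=
    exists_mem_sp_toBlocks₂₁_eq_one_of_matrix hcard hB hdet hadj hn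
  exact ⟨M, ⟨hM, fun i _ => by rw [hM_rank, hrank]⟩, hM₂₁⟩

end JordanCone

section Reindex

open LieAlgebra.Symplectic (sp)

variable {k : Type*} [Field k] {n p : ℕ} {lam : Fin p → ℕ}
  {M : Matrix (Fin (2 * n)) (Fin (2 * n)) k}

/-- The identification of the two halves of `Fin (2 * n)` with two copies of `Fin n`. -/
def halvesEquiv (n : ℕ) : Fin n ⊕ Fin n ≃ Fin (2 * n) :=
  finSumFinEquiv.trans (finCongr (two_mul n).symm)

variable (k n) in
/-- Mathlib's symplectic Lie algebra consists of matrices in two halves; this is the algebra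
equivalence to it from matrices indexed by `Fin (2 * n)`. -/
def toHalves : Matrix (Fin (2 * n)) (Fin (2 * n)) k ≃ₐ[k]
    Matrix (Fin n ⊕ Fin n) (Fin n ⊕ Fin n) k :=
  reindexAlgEquiv k k (halvesEquiv n).symm

theorem toHalves_Jmat : toHalves k n (Jmat k n) = -J (Fin n) k := by
  ext i j
  rcases i with i | i <;> rcases j with j | j <;>
    simp [toHalves, Jmat, J, halvesEquiv, Matrix.one_apply, Fin.ext_iff] <;> grind

theorem toHalves_transpose : toHalves k n Mᵀ = (toHalves k n M)ᵀ := rfl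

theorem mem_spSet_iff : M ∈ spSet k n ↔ toHalves k n M ∈ sp (Fin n) k := by
  have hJ : J (Fin n) k = toHalves k n (-Jmat k n) := by rw [map_neg, toHalves_Jmat, neg_neg]
  rw [mem_sp_iff, ← toHalves_transpose, hJ, ← map_mul, ← map_mul, ← map_neg,
    (toHalves k n).injective.eq_iff, mul_neg, neg_mul, neg_inj, eq_neg_iff_add_eq_zero]
  rfl

theorem spSet_eq_comap : spSet k n =
    (skewAdjointMatricesSubmodule (J (Fin n) k)).comap (toHalves k n).toLinearMap :=
  Set.ext fun _ => mem_spSet_iff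

theorem symm_mem_jordanOrbit_inter_spSet_iff {X : Matrix (Fin n ⊕ Fin n) (Fin n ⊕ Fin n) k} :
    (toHalves k n).symm X ∈ jordanOrbit k (2 * n) lam ∩ spSet k n ↔
      X ∈ sympJordanOrbit k (Fin n) lam := by
  have hrank (i : ℕ) : ((toHalves k n).symm X ^ i).rank = (X ^ i).rank := by
    rw [← map_pow]
    exact rank_submatrix _ _ _
  simp only [sympJordanOrbit, jordanOrbit, Set.mem_ofPred_eq, Set.mem_inter_iff, mem_spSet_iff,
    AlgEquiv.apply_symm_apply, hrank, and_comm]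

end Reindex

theorem stmt3_general {k : Type*} [Field k] [IsAlgClosed k] [NeZero (2 : k)] {n p : ℕ}
    (lam : Fin p → ℕ) (hsum : ∑ l, lam l = 2 * n) (hsymp : IsSymplecticParts lam) (hpn : p ≤ n) :
    zClosure (Set.image2 (· + ·) (jordanOrbit k (2 * n) lam ∩ spSet k n)
        (jordanOrbit k (2 * n) lam ∩ spSet k n)) = spSet k n := by
  refine subset_antisymm ?_ fun M hM => ?_
  · rw [spSet_eq_comap]
    exact zClosure_subset_submodule (Set.image2_subset_iff.2 fun x hx y hy =>
      add_mem hx.2 hy.2)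
  · have hinf : Infinite k := IsAlgClosed.instInfinite
    let f := (toHalves k n).symm.toLinearMap
    let S := jordanOrbit k (2 * n) lam ∩ spSet k n
    obtain ⟨E, hE, hE₂₁⟩ := exists_mem_sympJordanOrbit_toBlocks₂₁_eq_one (k := k) hsum hsymp hpn
    have hsum_mem : ∀ x ∈ sympJordanOrbit k (Fin n) lam, ∀ y ∈ sympJordanOrbit k (Fin n) lam,
        x + y ∈ f ⁻¹' zClosure (Set.image2 (· + ·) S S) := fun x hx y hy => by
      rw [Set.mem_preimage, map_add]
      exact subset_zClosure _ (Set.mem_image2_of_mem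
        (symm_mem_jordanOrbit_inter_spSet_iff.2 hx) (symm_mem_jordanOrbit_inter_spSet_iff.2 hy))
    have hmem := ((isCurveClosed_zClosure _).preimage f).sp_subset
      (isSymplecticCone_sympJordanOrbit (Fin n) lam) hsum_mem hE hE₂₁ (mem_spSet_iff.1 hM)
    simpa [f] using hmem

/-- For a symplectic partition `λ` of `2n` with at most `n` parts, the conical secant
variety of the nilpotent `Sp_{2n}`-orbit `O_λ ∩ sp_{2n}` is all of `sp_{2n}`. -/
theorem stmt3 {k : Type*} [Field k] [IsAlgClosed k] [CharZero k]
    {n p : ℕ} (lam : Fin p → ℕ)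
    (hanti : Antitone lam) (hpos : ∀ l, 1 ≤ lam l)
    (hsum : ∑ l, lam l = 2 * n)
    (hsymp : IsSymplecticParts lam)
    (hpn : p ≤ n) :
    zClosure (Set.image2 (· + ·) (jordanOrbit k (2 * n) lam ∩ spSet k n)
        (jordanOrbit k (2 * n) lam ∩ spSet k n))
      = spSet k n :=
  stmt3_general lam hsum hsymp hpn
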